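/- arXiv:math/0702586 — 4 statements merged into one kernel-verified Lean document; each statement's English description precedes it below -/
import Mathlib

section
/- The polyhedron 𝔓 is always contained in the convex hull of the finite set {μ_j ∣ j ∈ J}, without any convexity assumption on ψ. (First step of the proof of Lemma 5.4.) -/
open scoped RealInnerProductSpace

/-- **First step of the proof of Lemma 5.4.** With notation as in the lemma,
the polyhedron `𝔓 = {l | ∀ χ, ⟪χ, l⟫ ≤ ψ χ}` is always contained in the convex
hull of the finite set of points `{μ j}`, without any convexity assumption on `ψ`. -/
theorem polyhedron_subset_convexHull
    {E : Type} [NormedAddCommGroup E] [InnerProductSpace ℝ E] [FiniteDimensional ℝ E]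
    {J : Type} [Fintype J] [Nonempty J]
    (σ : J → Set E) (μ : J → E) (ψ : E → ℝ)
    (hclosed : ∀ j, IsClosed (σ j))
    (hconvex : ∀ j, Convex ℝ (σ j))
    (hcone : ∀ j, ∀ c : ℝ, 0 ≤ c → ∀ x ∈ σ j, c • x ∈ σ j)
    (hint : ∀ j, (interior (σ j)).Nonempty)
    (hcover : (⋃ j, σ j) = Set.univ)
    (hψ : ∀ j, ∀ χ ∈ σ j, ψ χ = ⟪χ, μ j⟫) :
    {l : E | ∀ χ : E, ⟪χ, l⟫ ≤ ψ χ} ⊆ convexHull ℝ (Set.range μ) := by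
  intro l hl
  by_contra hn
  have hcl : IsClosed (convexHull ℝ (Set.range μ)) :=
    (Set.finite_range μ).isClosed_convexHull ℝ
  obtain ⟨f, u, h1, h2⟩ :=
    geometric_hahn_banach_closed_point (convex_convexHull ℝ _) hcl hn
  have key : ∀ x, ⟪(InnerProductSpace.toDual ℝ E).symm f, x⟫ = f x := fun x =>
    InnerProductSpace.toDual_symm_apply
  have hmem : (InnerProductSpace.toDual ℝ E).symm f ∈ ⋃ j, σ j := by
    rw [hcover]; trivial
  obtain ⟨j, hj⟩ := Set.mem_iUnion.1 hmem
  have h3 := hl ((InnerProductSpace.toDual ℝ E).symm f)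
  rw [hψ j _ hj, key, key] at h3
  have h4 := h1 (μ j) (subset_convexHull ℝ _ ⟨j, rfl⟩)
  linarith
end

section
/- Let C be a chain complex of ℤ_ℓ-modules concentrated in finitely many degrees. Assume (i) for every q the homology H_q(C) is a finitely generated ℤ_ℓ-module, and (ii) the ℓ-torsion of C is bounded, i.e. for every q there is an integer N such that C_q[ℓⁿ] = C_q[ℓᴺ] for all n ≥ N. Then for every q the natural map H_q(C) → lim_n H_q(C/ℓⁿC) is an isomorphism, where C/ℓⁿC denotes the quotient complex with terms C_q/ℓⁿC_q. (Isomorphism (4.3) in the proof of Proposition 4.1.) -/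
noncomputable section

namespace LadicHomologyLimit

variable (p : ℕ) [Fact p.Prime]

/-- Transport of a `ℤ`-indexed family of modules along an equality of indices. -/
def casteq (D : ℤ → Type) [∀ q, AddCommGroup (D q)] [∀ q, Module ℤ_[p] (D q)]
    {a b : ℤ} (h : a = b) : D a ≃ₗ[ℤ_[p]] D b := by
  subst h; exact LinearEquiv.refl _ _

lemma casteq_natural {D E : ℤ → Type}
    [∀ q, AddCommGroup (D q)] [∀ q, Module ℤ_[p] (D q)]
    [∀ q, AddCommGroup (E q)] [∀ q, Module ℤ_[p] (E q)]
    (φ : ∀ a : ℤ, D a →ₗ[ℤ_[p]] E a) {a b : ℤ} (h : a = b) (x : D a) :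
    casteq p E h (φ a x) = φ b (casteq p D h x) := by
  subst h; rfl

section Homology

variable (D : ℤ → Type) [∀ q, AddCommGroup (D q)] [∀ q, Module ℤ_[p] (D q)]
variable (dD : ∀ q : ℤ, D q →ₗ[ℤ_[p]] D (q - 1))

/-- Cycles in degree `q` of a chain complex `(D, dD)`. -/
abbrev cycles (q : ℤ) : Submodule ℤ_[p] (D q) := LinearMap.ker (dD q)

/-- Boundaries in degree `q` of a chain complex `(D, dD)`. -/
abbrev bdry (q : ℤ) : Submodule ℤ_[p] (D q) :=
  Submodule.map (casteq p D (show q + 1 - 1 = q by ring)).toLinearMap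
    (LinearMap.range (dD (q + 1)))

/-- Homology in degree `q` of a chain complex `(D, dD)`:
cycles modulo boundaries. -/
abbrev Hgy (q : ℤ) :=
  ↥(cycles p D dD q) ⧸ (bdry p D dD q).comap (cycles p D dD q).subtype

end Homology

variable (C : ℤ → Type) [∀ q, AddCommGroup (C q)] [∀ q, Module ℤ_[p] (C q)]
variable (d : ∀ q : ℤ, C q →ₗ[ℤ_[p]] C (q - 1))

/-- The submodule `ℓⁿ · C q` of `C q` (here `ℓ = p`). -/
abbrev lpow (n : ℕ) (q : ℤ) : Submodule ℤ_[p] (C q) :=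
  LinearMap.range ((p : ℤ_[p]) ^ n • (LinearMap.id : C q →ₗ[ℤ_[p]] C q))

/-- The term in degree `q` of the quotient complex `C/ℓⁿC`. -/
abbrev Cn (n : ℕ) (q : ℤ) := C q ⧸ lpow p C n q

/-- The differential of the quotient complex `C/ℓⁿC`. -/
def dn (n : ℕ) (q : ℤ) : Cn p C n q →ₗ[ℤ_[p]] Cn p C n (q - 1) :=
  Submodule.mapQ (lpow p C n q) (lpow p C n (q - 1)) (d q) (by
    rintro x ⟨y, rfl⟩
    exact ⟨d q y, by simp⟩)

/-- The transition map `C/ℓⁿ⁺¹C → C/ℓⁿC` of the inverse system, in degree `q`. -/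
def trC (n : ℕ) (q : ℤ) : Cn p C (n + 1) q →ₗ[ℤ_[p]] Cn p C n q :=
  Submodule.mapQ (lpow p C (n + 1) q) (lpow p C n q) LinearMap.id (by
    rintro x ⟨y, rfl⟩
    exact ⟨(p : ℤ_[p]) • y, by
      simp [LinearMap.smul_apply, ← mul_smul, pow_succ, mul_comm]⟩)

lemma dn_trC (n : ℕ) (q : ℤ) (x : Cn p C (n + 1) q) :
    dn p C d n q (trC p C n q x) = trC p C n (q - 1) (dn p C d (n + 1) q x) := by
  obtain ⟨y, rfl⟩ := Submodule.Quotient.mk_surjective _ x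
  simp [dn, trC, Submodule.mapQ_apply]

/-- The transition map on cycles. -/
def trZ (n : ℕ) (q : ℤ) :
    ↥(cycles p (Cn p C (n + 1)) (dn p C d (n + 1)) q) →ₗ[ℤ_[p]]
      ↥(cycles p (Cn p C n) (dn p C d n) q) :=
  (trC p C n q).restrict (fun x hx => by
    have h0 : dn p C d n q (trC p C n q x) = 0 := by
      rw [dn_trC, LinearMap.mem_ker.mp hx, map_zero]
    exact LinearMap.mem_ker.mpr h0)

/-- The transition map `H_q(C/ℓⁿ⁺¹C) → H_q(C/ℓⁿC)` on homology. -/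
def trH (n : ℕ) (q : ℤ) :
    Hgy p (Cn p C (n + 1)) (dn p C d (n + 1)) q →ₗ[ℤ_[p]]
      Hgy p (Cn p C n) (dn p C d n) q :=
  Submodule.mapQ _ _ (trZ p C d n q) (by
    intro z hz
    simp only [Submodule.mem_comap, Submodule.coe_subtype, Submodule.mem_map,
      LinearMap.mem_range, LinearEquiv.coe_coe] at hz ⊢
    obtain ⟨w, ⟨y, hy⟩, hw⟩ := hz
    refine ⟨trC p C n (q + 1 - 1) w, ⟨trC p C n (q + 1) y, ?_⟩, ?_⟩
    · rw [dn_trC, hy]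
    · rw [casteq_natural p (fun a => trC p C n a), hw]
      rfl)

/-- The reduction map `C → C/ℓⁿC` in degree `q`. -/
def ρC (n : ℕ) (q : ℤ) : C q →ₗ[ℤ_[p]] Cn p C n q := (lpow p C n q).mkQ

lemma dn_ρC (n : ℕ) (q : ℤ) (x : C q) :
    dn p C d n q (ρC p C n q x) = ρC p C n (q - 1) (d q x) := by
  simp [dn, ρC, Submodule.mapQ_apply]

/-- The reduction map on cycles. -/
def ρZ (n : ℕ) (q : ℤ) :
    ↥(cycles p C d q) →ₗ[ℤ_[p]] ↥(cycles p (Cn p C n) (dn p C d n) q) :=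
  (ρC p C n q).restrict (fun x hx => by
    have h0 : dn p C d n q (ρC p C n q x) = 0 := by
      rw [dn_ρC, LinearMap.mem_ker.mp hx, map_zero]
    exact LinearMap.mem_ker.mpr h0)

/-- The natural map `H_q(C) → H_q(C/ℓⁿC)` on homology. -/
def ρH (n : ℕ) (q : ℤ) :
    Hgy p C d q →ₗ[ℤ_[p]] Hgy p (Cn p C n) (dn p C d n) q :=
  Submodule.mapQ _ _ (ρZ p C d n q) (by
    intro z hz
    simp only [Submodule.mem_comap, Submodule.coe_subtype, Submodule.mem_map,
      LinearMap.mem_range, LinearEquiv.coe_coe] at hz ⊢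
    obtain ⟨w, ⟨y, hy⟩, hw⟩ := hz
    refine ⟨ρC p C n (q + 1 - 1) w, ⟨ρC p C n (q + 1) y, ?_⟩, ?_⟩
    · rw [dn_ρC, hy]
    · rw [casteq_natural p (fun a => ρC p C n a), hw]
      rfl)

lemma trC_ρC (n : ℕ) (q : ℤ) (x : C q) :
    trC p C n q (ρC p C (n + 1) q x) = ρC p C n q x := by
  simp [trC, ρC, Submodule.mapQ_apply]

lemma trZ_ρZ (n : ℕ) (q : ℤ) (x : ↥(cycles p C d q)) :
    trZ p C d n q (ρZ p C d (n + 1) q x) = ρZ p C d n q x := by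
  ext
  simp [trZ, ρZ, LinearMap.restrict_apply, trC_ρC]

lemma trH_ρH (n : ℕ) (q : ℤ) (x : Hgy p C d q) :
    trH p C d n q (ρH p C d (n + 1) q x) = ρH p C d n q x := by
  obtain ⟨z, rfl⟩ := Submodule.Quotient.mk_surjective _ x
  simp [trH, ρH, Submodule.mapQ_apply, trZ_ρZ]

/-- The inverse limit `lim_n H_q(C/ℓⁿC)` of the homology of the quotient
complexes along the transition maps. -/
def homologyLimit (q : ℤ) : Set (∀ n : ℕ, Hgy p (Cn p C n) (dn p C d n) q) :=
  {f | ∀ n : ℕ, trH p C d n q (f (n + 1)) = f n}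

/-- The natural map `H_q(C) → lim_n H_q(C/ℓⁿC)`. -/
def natMap (q : ℤ) (x : Hgy p C d q) : homologyLimit p C d q :=
  ⟨fun n => ρH p C d n q x, fun n => trH_ρH p C d n q x⟩

lemma aux_scalar (a : ℕ → ℤ_[p]) :
    ∃ A : ℕ → ℤ_[p], ∀ m, A m = a m + (p : ℤ_[p]) * A (m + 1) := by
  have hp1 : ‖(p : ℤ_[p])‖ < 1 := by
    rw [PadicInt.norm_p]
    exact inv_lt_one_of_one_lt₀ (by exact_mod_cast (Fact.out : p.Prime).one_lt)
  have hs : ∀ m, Summable fun k : ℕ => (p : ℤ_[p]) ^ k * a (m + k) := by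
    intro m
    refine Summable.of_norm_bounded (g := fun k : ℕ => ‖(p : ℤ_[p])‖ ^ k)
      (summable_geometric_of_lt_one (norm_nonneg _) hp1) ?_
    intro k
    rw [norm_mul, norm_pow]
    exact mul_le_of_le_one_right (by positivity) (PadicInt.norm_le_one _)
  refine ⟨fun m => ∑' k : ℕ, (p : ℤ_[p]) ^ k * a (m + k), fun m => ?_⟩
  have h1 := (hs m).tsum_eq_zero_add
  refine h1.trans ?_
  beta_reduce
  rw [← (hs (m + 1)).tsum_mul_left]
  simp only [pow_zero, one_mul, add_zero]
  congr 1
  refine tsum_congr fun k => ?_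
  rw [show m + (k + 1) = m + 1 + k by ring]
  ring

lemma aux_complete (H : Type) [AddCommGroup H] [Module ℤ_[p] H] [Module.Finite ℤ_[p] H]
    (z : ℕ → H) (hz : ∀ m, ∃ h : H, z (m + 1) - z m = (p : ℤ_[p]) ^ m • h) :
    ∃ L : H, ∀ m, ∃ k : H, L - z m = (p : ℤ_[p]) ^ m • k := by
  choose h hh using hz
  obtain ⟨n, g, hg⟩ := Module.Finite.exists_fin (R := ℤ_[p]) (M := H)
  have h1 : ∀ m, ∃ c : Fin n → ℤ_[p], ∑ i, c i • g i = h m := by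
    intro m
    have : h m ∈ Submodule.span ℤ_[p] (Set.range g) := by rw [hg]; trivial
    exact (Submodule.mem_span_range_iff_exists_fun _).mp this
  choose c hc using h1
  choose A hA using fun i => aux_scalar p (fun m => c m i)
  let K : ℕ → H := fun m => ∑ i, A i m • g i
  have hK : ∀ m, K m = h m + (p : ℤ_[p]) • K (m + 1) := by
    intro m
    simp only [K]
    rw [← hc m, Finset.smul_sum, ← Finset.sum_add_distrib]
    refine Finset.sum_congr rfl fun i _ => ?_
    rw [hA i m, add_smul, mul_smul]
  refine ⟨z 0 + K 0, fun m => ⟨K m, ?_⟩⟩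
  induction m with
  | zero => simp
  | succ m ih =>
    have e : z 0 + K 0 - z (m + 1) = (z 0 + K 0 - z m) - (z (m + 1) - z m) := by abel
    rw [e, ih, hh, hK m, smul_add, smul_smul, ← pow_succ]
    abel

lemma aux_haus (H : Type) [AddCommGroup H] [Module ℤ_[p] H] [Module.Finite ℤ_[p] H]
    (x : H) (hx : ∀ m : ℕ, ∃ h : H, x = (p : ℤ_[p]) ^ m • h) : x = 0 := by
  have hH : IsHausdorff (IsLocalRing.maximalIdeal ℤ_[p]) H := inferInstance
  refine hH.haus x fun m => ?_
  obtain ⟨h, rfl⟩ := hx m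
  rw [SModEq.zero]
  refine Submodule.smul_mem_smul (Ideal.pow_mem_pow ?_ m) trivial
  rw [PadicInt.maximalIdeal_eq_span_p]
  exact Ideal.mem_span_singleton_self _

lemma aux_tors (H : Type) [AddCommGroup H] [Module ℤ_[p] H] [Module.Finite ℤ_[p] H] :
    ∃ M : ℕ, ∀ (n : ℕ) (x : H), (p : ℤ_[p]) ^ n • x = 0 → (p : ℤ_[p]) ^ M • x = 0 := by
  have : IsNoetherian ℤ_[p] H := inferInstance
  let F : ℕ →o Submodule ℤ_[p] H :=
    ⟨fun n => LinearMap.ker (LinearMap.lsmul ℤ_[p] H ((p : ℤ_[p]) ^ n)), by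
      intro a b hab x hx
      simp only [LinearMap.mem_ker, LinearMap.lsmul_apply] at hx ⊢
      obtain ⟨k, rfl⟩ := Nat.exists_eq_add_of_le hab
      rw [pow_add, mul_comm, mul_smul, hx, smul_zero]⟩
  obtain ⟨M, hM⟩ := monotone_stabilizes_iff_noetherian.mpr this F
  refine ⟨M, fun n x hx => ?_⟩
  have h1 : x ∈ F n := LinearMap.mem_ker.mpr hx
  have h2 : x ∈ F M := by
    rcases le_total M n with h | h
    · rw [hM n h]; exact h1
    · exact F.monotone h h1
  exact LinearMap.mem_ker.mp h2

lemma aux_cast {a b : ℤ} (h : a = b) (h' : a - 1 = b - 1) (y : C a) :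
    casteq p C h' (d a y) = d b (casteq p C h y) := by
  subst h; rfl

lemma aux_bdry (q : ℤ) (x : C (q - 1)) (hx : x ∈ bdry p C d (q - 1)) :
    ∃ w : C q, d q w = x := by
  obtain ⟨_, ⟨y, rfl⟩, rfl⟩ := hx
  exact ⟨casteq p C (by ring) y, (aux_cast p C d (by ring) _ y).symm⟩

/-- `c` is a lift to `C q` of a cycle representing the class `f`. -/
def Rep (n : ℕ) (q : ℤ) (f : Hgy p (Cn p C n) (dn p C d n) q) (c : C q) : Prop :=
  ∃ z : ↥(cycles p (Cn p C n) (dn p C d n) q), z.1 = ρC p C n q c ∧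
    Submodule.Quotient.mk z = f

lemma rep_exists (n : ℕ) (q : ℤ) (f : Hgy p (Cn p C n) (dn p C d n) q) :
    ∃ c, Rep p C d n q f c := by
  obtain ⟨z, rfl⟩ := Submodule.Quotient.mk_surjective _ f
  obtain ⟨c, hc⟩ := Submodule.Quotient.mk_surjective _ z.1
  exact ⟨c, z, hc.symm, rfl⟩

lemma rep_tr (n : ℕ) (q : ℤ) (f : Hgy p (Cn p C (n + 1)) (dn p C d (n + 1)) q) (c : C q)
    (h : Rep p C d (n + 1) q f c) : Rep p C d n q (trH p C d n q f) c := by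
  obtain ⟨z, hz, rfl⟩ := h
  refine ⟨trZ p C d n q z, ?_, rfl⟩
  change trC p C n q z.1 = _
  rw [hz, trC_ρC]

lemma ρC_eq_zero (n : ℕ) (q : ℤ) (x : C q) :
    ρC p C n q x = 0 ↔ ∃ e, x = (p : ℤ_[p]) ^ n • e := by
  rw [ρC, Submodule.mkQ_apply, Submodule.Quotient.mk_eq_zero]
  constructor
  · rintro ⟨e, rfl⟩; exact ⟨e, rfl⟩
  · rintro ⟨e, rfl⟩; exact ⟨e, rfl⟩

lemma rep_d (n : ℕ) (q : ℤ) (f : Hgy p (Cn p C n) (dn p C d n) q) (c : C q)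
    (h : Rep p C d n q f c) : ∃ e, d q c = (p : ℤ_[p]) ^ n • e := by
  obtain ⟨z, hz, rfl⟩ := h
  rw [← ρC_eq_zero, ← dn_ρC, ← hz]
  exact z.2

lemma rep_eq (n : ℕ) (q : ℤ) (f : Hgy p (Cn p C n) (dn p C d n) q) (c : C q)
    (h : Rep p C d n q f c) (x : ↥(cycles p C d q)) (w : C q)
    (hw : x.1 - c = (p : ℤ_[p]) ^ n • w) :
    ρH p C d n q (Submodule.Quotient.mk x) = f := by
  obtain ⟨z, hz, rfl⟩ := h
  change Submodule.Quotient.mk (ρZ p C d n q x) = _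
  congr 1
  apply Subtype.ext
  change ρC p C n q x.1 = _
  rw [hz, ← sub_eq_zero, ← map_sub, ρC_eq_zero]
  exact ⟨w, hw⟩

lemma ρH_ker (n : ℕ) (q : ℤ) (x : ↥(cycles p C d q))
    (h : ρH p C d n q (Submodule.Quotient.mk x) = 0) :
    ∃ b ∈ bdry p C d q, ∃ c : C q, x.1 - b = (p : ℤ_[p]) ^ n • c := by
  change Submodule.Quotient.mk (ρZ p C d n q x) = _ at h
  rw [Submodule.Quotient.mk_eq_zero] at h
  obtain ⟨_, ⟨y, rfl⟩, hy⟩ := h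
  obtain ⟨y, rfl⟩ := Submodule.Quotient.mk_surjective _ y
  refine ⟨casteq p C (by ring) (d (q + 1) y), ⟨_, ⟨y, rfl⟩, rfl⟩, ?_⟩
  rw [← ρC_eq_zero, map_sub, sub_eq_zero]
  change _ = ρC p C n q x.1 at hy
  rw [← hy]
  change casteq p (Cn p C n) _ (dn p C d n (q + 1) (ρC p C n (q + 1) y)) = _
  rw [dn_ρC, casteq_natural p (fun a => ρC p C n a)]

lemma bdry_le (hdd : ∀ (q : ℤ) (x : C q), d (q - 1) (d q x) = 0) (q : ℤ) :
    bdry p C d q ≤ cycles p C d q := by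
  rintro _ ⟨_, ⟨y, rfl⟩, rfl⟩
  change d q (casteq p C _ (d (q + 1) y)) = 0
  rw [← aux_cast p C d (by ring) (by ring), hdd, map_zero]

lemma ρH_ker_div (hdd : ∀ (q : ℤ) (x : C q), d (q - 1) (d q x) = 0) (q : ℤ) (N : ℕ)
    (hN : ∀ (n : ℕ) (x : C (q - 1)), (p : ℤ_[p]) ^ n • x = 0 → (p : ℤ_[p]) ^ N • x = 0)
    (n : ℕ) (x : Hgy p C d q) (h : ρH p C d (n + N) q x = 0) :
    ∃ y : Hgy p C d q, x = (p : ℤ_[p]) ^ n • y := by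
  obtain ⟨x, rfl⟩ := Submodule.Quotient.mk_surjective _ x
  obtain ⟨b, hb, c, hc⟩ := ρH_ker p C d _ q x h
  have h0 : d q (x.1 - b) = 0 := by
    rw [map_sub, LinearMap.mem_ker.mp x.2, LinearMap.mem_ker.mp (bdry_le p C d hdd q hb),
      sub_zero]
  rw [hc, map_smul] at h0
  have h1 := hN _ _ h0
  refine ⟨Submodule.Quotient.mk ⟨(p : ℤ_[p]) ^ N • c, ?_⟩, ?_⟩
  · rw [LinearMap.mem_ker, map_smul, h1]
  · rw [← Submodule.Quotient.mk_smul, Submodule.Quotient.eq]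
    change x.1 - (p : ℤ_[p]) ^ n • (p : ℤ_[p]) ^ N • c ∈ bdry p C d q
    rw [smul_smul, ← pow_add, ← hc]
    simpa using hb

lemma ρH_smul (n : ℕ) (q : ℤ) (x : Hgy p C d q) :
    ρH p C d n q ((p : ℤ_[p]) ^ n • x) = 0 := by
  obtain ⟨x, rfl⟩ := Submodule.Quotient.mk_surjective _ x
  rw [← Submodule.Quotient.mk_smul]
  refine rep_eq p C d n q 0 0 ⟨0, by simp, rfl⟩ _ x.1 ?_
  simp

lemma ρH_surj (hdd : ∀ (q : ℤ) (x : C q), d (q - 1) (d q x) = 0) (q : ℤ) (N M : ℕ)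
    (hN : ∀ (n : ℕ) (x : C (q - 1 - 1)), (p : ℤ_[p]) ^ n • x = 0 → (p : ℤ_[p]) ^ N • x = 0)
    (hM : ∀ (n : ℕ) (x : Hgy p C d (q - 1)), (p : ℤ_[p]) ^ n • x = 0 →
      (p : ℤ_[p]) ^ M • x = 0)
    (f : ∀ n : ℕ, Hgy p (Cn p C n) (dn p C d n) q) (hf : f ∈ homologyLimit p C d q)
    (m : ℕ) : ∃ z, ρH p C d m q z = f m := by
  obtain ⟨c, hc⟩ := rep_exists p C d (m + (M + N)) q (f (m + (M + N)))
  have hdown : ∀ k, Rep p C d (m + k) q (f (m + k)) c → Rep p C d m q (f m) c := by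
    intro k
    induction k with
    | zero => exact id
    | succ k ih =>
      intro h
      apply ih
      rw [← hf (m + k)]
      exact rep_tr p C d _ q _ _ h
  have hcm := hdown _ hc
  obtain ⟨e, he⟩ := rep_d p C d _ q _ _ hc
  have h0 : (p : ℤ_[p]) ^ (m + (M + N)) • d (q - 1) e = 0 := by
    rw [← map_smul, ← he, hdd]
  have h1 := hN _ _ h0
  let E : ↥(cycles p C d (q - 1)) :=
    ⟨(p : ℤ_[p]) ^ N • e, by rw [LinearMap.mem_ker, map_smul, h1]⟩
  have h2 : (p : ℤ_[p]) ^ (m + M) • (Submodule.Quotient.mk E : Hgy p C d (q - 1)) = 0 := by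
    rw [← Submodule.Quotient.mk_smul, Submodule.Quotient.mk_eq_zero]
    change (p : ℤ_[p]) ^ (m + M) • (p : ℤ_[p]) ^ N • e ∈ bdry p C d (q - 1)
    rw [smul_smul, ← pow_add, add_assoc, ← he]
    refine ⟨_, ⟨casteq p C (by ring) c, rfl⟩, ?_⟩
    change casteq p C _ (d (q - 1 + 1) (casteq p C _ c)) = _
    rw [← aux_cast p C d (show q = q - 1 + 1 by ring) (by ring)]
    have : ∀ (a b : ℤ) (h : a = b) (h' : b = a) (x : C a),
        casteq p C h' (casteq p C h x) = x := by
      intro a b h h' x; subst h; rfl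
    exact this _ _ _ _ _
  have h3 := hM _ _ h2
  rw [← Submodule.Quotient.mk_smul, Submodule.Quotient.mk_eq_zero] at h3
  obtain ⟨w, hw⟩ := aux_bdry p C d q _ h3
  replace hw : d q w = (p : ℤ_[p]) ^ M • (p : ℤ_[p]) ^ N • e := hw
  refine ⟨Submodule.Quotient.mk ⟨c - (p : ℤ_[p]) ^ m • w, ?_⟩, ?_⟩
  · rw [LinearMap.mem_ker, map_sub, map_smul, hw, he, smul_smul, smul_smul,
      ← pow_add, ← pow_add, add_assoc, sub_self]
  · refine rep_eq p C d m q _ c hcm _ (-w) ?_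
    simp

/-- **Isomorphism (4.3) in the proof of Proposition 4.1.**  Let `C` be a chain complex
of `ℤ_ℓ`-modules concentrated in finitely many degrees such that (i) each homology
module `H_q(C)` is finitely generated over `ℤ_ℓ` and (ii) the `ℓ`-torsion of each term
of `C` is bounded.  Then for every `q` the natural map
`H_q(C) → lim_n H_q(C/ℓⁿC)` is an isomorphism. -/
theorem homology_natMap_bijective
    (hdd : ∀ (q : ℤ) (x : C q), d (q - 1) (d q x) = 0)
    (hfin : ∃ s : Finset ℤ, ∀ q ∉ s, ∀ x : C q, x = 0)
    (hfg : ∀ q : ℤ, Module.Finite ℤ_[p] (Hgy p C d q))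
    (htors : ∀ q : ℤ, ∃ N : ℕ, ∀ n, N ≤ n →
      {x : C q | (p : ℤ_[p]) ^ n • x = 0} = {x : C q | (p : ℤ_[p]) ^ N • x = 0}) :
    ∀ q : ℤ, Function.Bijective (natMap p C d q) := by
  intro q
  have hT : ∀ r : ℤ, ∃ N : ℕ, ∀ (n : ℕ) (x : C r), (p : ℤ_[p]) ^ n • x = 0 →
      (p : ℤ_[p]) ^ N • x = 0 := by
    intro r
    obtain ⟨N, hN⟩ := htors r
    refine ⟨N, fun n x hx => ?_⟩
    have h1 : x ∈ {x : C r | (p : ℤ_[p]) ^ (N + n) • x = 0} := by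
      change (p : ℤ_[p]) ^ (N + n) • x = 0
      rw [pow_add, mul_smul, hx, smul_zero]
    rw [hN _ (Nat.le_add_right N n)] at h1
    exact h1
  obtain ⟨N, hN⟩ := hT (q - 1)
  obtain ⟨N', hN'⟩ := hT (q - 1 - 1)
  have := hfg q
  have := hfg (q - 1)
  obtain ⟨M, hM⟩ := aux_tors p (Hgy p C d (q - 1))
  constructor
  · intro x y hxy
    rw [← sub_eq_zero]
    refine aux_haus p _ _ fun m => ρH_ker_div p C d hdd q N hN m _ ?_
    have h1 : ρH p C d (m + N) q x = ρH p C d (m + N) q y :=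
      congrFun (congrArg Subtype.val hxy) (m + N)
    rw [map_sub, h1, sub_self]
  · rintro ⟨f, hf⟩
    choose z hz using ρH_surj p C d hdd q N' M hN' hM f hf
    have hdown : ∀ (m k : ℕ) (x : Hgy p C d q), ρH p C d (m + k) q x = f (m + k) →
        ρH p C d m q x = f m := by
      intro m k x
      induction k with
      | zero => exact id
      | succ k ih =>
        intro h
        apply ih
        rw [← hf (m + k), ← trH_ρH]
        exact congrArg _ h
    obtain ⟨L, hL⟩ := aux_complete p (Hgy p C d q) (fun m => z (m + N)) (by
      intro m
      refine ρH_ker_div p C d hdd q N hN m _ ?_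
      rw [map_sub, hz, sub_eq_zero]
      refine hdown (m + N) 1 _ ?_
      rw [show m + 1 + N = m + N + 1 by ring]
      exact hz _)
    refine ⟨L, Subtype.ext (funext fun m => ?_)⟩
    obtain ⟨k, hk⟩ := hL m
    have h1 := ρH_smul p C d m q k
    rw [← hk, map_sub, sub_eq_zero] at h1
    exact h1.trans (hdown m N _ (hz _))

end LadicHomologyLimit
end
end

section
/- For t ∈ F, there exists x ∈ SL(2, F) such that all entries of x⁻¹ γ_t x lie in 𝔬 if and only if v(t) ≥ 0, i.e. if and only if t ∈ 𝔬. (Remark following Proposition 9.2: the affine Springer fiber 𝔛_γ for SL(2) is nonempty if and only if γ ∈ 𝔱(𝔬).) -/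
noncomputable section
open scoped Classical

/-- The ring of integers `𝔬 = k[[ε]]`, viewed as a subring of `F = k((ε))`. -/
def intRing (k : Type) [Field k] : Subring (LaurentSeries k) :=
  (HahnSeries.ofPowerSeries ℤ k).range

/-- The `ε`-adic valuation on `F = k((ε))`, normalized by `v ε = 1`,
with the convention `v 0 = ⊤`. -/
def v {k : Type} [Field k] (x : LaurentSeries k) : WithTop ℤ :=
  if x = 0 then ⊤ else (x.order : WithTop ℤ)

theorem zero_le_v_iff {k : Type} [Field k] (t : LaurentSeries k) :
    0 ≤ v t ↔ 0 ≤ t.order := by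
  unfold v
  split_ifs with h
  · simp [h]
  · exact_mod_cast Iff.rfl

theorem order_nonneg_iff {k : Type} [Field k] (t : LaurentSeries k) :
    0 ≤ t.order ↔ t ∈ intRing k := by
  constructor
  · intro h
    have hn : ((t.order.toNat : ℕ) : ℤ) = t.order := Int.toNat_of_nonneg h
    exact ⟨_, LaurentSeries.X_order_mul_powerSeriesPart hn⟩
  · rintro ⟨f, rfl⟩
    by_contra! h
    have h0 : (HahnSeries.ofPowerSeries ℤ k f) ≠ 0 := by
      intro h0
      simp [h0] at h
    have h1 := PowerSeries.coeff_coe f (HahnSeries.ofPowerSeries ℤ k f).order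
    rw [if_pos h] at h1
    exact HahnSeries.coeff_order_eq_zero.not.mpr h0 h1

/-- **Remark following Proposition 9.2.**  For `t ∈ F` and `γ_t = !![t, 0; 0, -t]`,
there exists `x ∈ SL(2, F)` with all entries of `x⁻¹ * γ_t * x` in `𝔬` if and only if
`v t ≥ 0`, i.e. if and only if `t ∈ 𝔬`: the affine Springer fiber `𝔛_γ` is nonempty
iff `γ ∈ 𝔱(𝔬)`. -/
theorem springer_fiber_nonempty_iff
    {k : Type} [Field k] (t : LaurentSeries k) :
    ((∃ x : Matrix (Fin 2) (Fin 2) (LaurentSeries k), x.det = 1 ∧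
        ∀ i j, (x⁻¹ * !![t, 0; 0, -t] * x) i j ∈ intRing k) ↔ 0 ≤ v t) ∧
    (0 ≤ v t ↔ t ∈ intRing k) := by
  have hv : 0 ≤ v t ↔ t ∈ intRing k := (zero_le_v_iff t).trans (order_nonneg_iff t)
  refine ⟨⟨?_, ?_⟩, hv⟩
  · rintro ⟨x, hx, h⟩
    have hd : (x⁻¹ * !![t, 0; 0, -t] * x).det = -(t * t) := by
      rw [Matrix.det_mul, Matrix.det_mul, Matrix.det_nonsing_inv, hx, Matrix.det_fin_two_of]
      simp
    have hm : -(t * t) ∈ intRing k := by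
      rw [← hd, Matrix.det_fin_two]
      exact sub_mem (mul_mem (h _ _) (h _ _)) (mul_mem (h _ _) (h _ _))
    have hm2 : t * t ∈ intRing k := by simpa using neg_mem hm
    rw [zero_le_v_iff]
    by_cases h0 : t = 0
    · simp [h0]
    · rw [← order_nonneg_iff, HahnSeries.order_mul h0 h0] at hm2
      omega
  · intro h
    have ht := hv.1 h
    refine ⟨1, Matrix.det_one, fun i j => ?_⟩
    rw [inv_one, one_mul, mul_one]
    fin_cases i <;> fin_cases j
    · exact ht
    · exact zero_mem _
    · exact zero_mem _
    · exact neg_mem ht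
end
end

section
/- Assume char k ≠ 2 and let t ∈ F be nonzero. For n ∈ ℕ and u ∈ F, set x_u = !![1, u; 0, 1] · !![εⁿ, 0; 0, ε⁻ⁿ] ∈ SL(2, F). Then all entries of x_u⁻¹ γ_t x_u lie in 𝔬 if and only if v(t) ≥ 0 and v(u) ≥ 2n − v(t). (Computation of the truncated Bruhat cells in the proof of Proposition 9.2.) -/
noncomputable section
open scoped Classical

/-- The uniformizer `ε ∈ k((ε))`. -/
def ε (k : Type) [Field k] : LaurentSeries k := HahnSeries.single 1 1

theorem v_eq_orderTop {k : Type} [Field k] (x : LaurentSeries k) : v x = x.orderTop := by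
  unfold v
  split_ifs with h
  · simp [h]
  · exact HahnSeries.order_eq_orderTop_of_ne_zero h

theorem v_mul' {k : Type} [Field k] (x y : LaurentSeries k) : v (x * y) = v x + v y := by
  simp only [v_eq_orderTop, HahnSeries.orderTop_mul]

theorem mem_intRing_iff {k : Type} [Field k] (x : LaurentSeries k) :
    x ∈ intRing k ↔ 0 ≤ v x := by
  constructor
  · rintro ⟨p, rfl⟩
    unfold v
    split_ifs with h
    · exact le_top
    · rw [← WithTop.coe_zero, WithTop.coe_le_coe]
      by_contra hlt
      push Not at hlt
      apply mt HahnSeries.coeff_order_eq_zero.mp h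
      rw [PowerSeries.coeff_coe, if_pos hlt]
  · intro h
    by_cases hx : x = 0
    · rw [hx]; exact (intRing k).zero_mem
    · unfold v at h
      rw [if_neg hx, ← WithTop.coe_zero, WithTop.coe_le_coe] at h
      obtain ⟨n, hn⟩ := Int.eq_ofNat_of_zero_le h
      exact ⟨_, LaurentSeries.X_order_mul_powerSeriesPart hn.symm⟩

theorem v_two {k : Type} [Field k] (h2 : (2 : k) ≠ 0) : v (2 : LaurentSeries k) = 0 := by
  have : (2 : LaurentSeries k) = HahnSeries.single 0 2 := by
    rw [← HahnSeries.C_apply, map_ofNat]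
  rw [v_eq_orderTop, this, HahnSeries.orderTop_single h2, WithTop.coe_zero]

theorem ε_pow_eq (k : Type) [Field k] (n : ℕ) :
    (ε k) ^ n = HahnSeries.single (n : ℤ) 1 := by
  simp [ε, HahnSeries.single_pow]

theorem conj_eq {K : Type} [Field K] (t u e : K) (he : e ≠ 0) :
    (!![1, u; 0, 1] * !![e, 0; 0, e⁻¹])⁻¹ * !![t, 0; 0, -t] *
      (!![1, u; 0, 1] * !![e, 0; 0, e⁻¹]) = !![t, 2 * (t * u) * (e⁻¹ * e⁻¹); 0, -t] := by
  have hd : IsUnit (!![1, u; 0, 1] * !![e, 0; 0, e⁻¹] : Matrix (Fin 2) (Fin 2) K).det := by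
    simp [Matrix.det_fin_two, he]
  have key : !![t, 0; 0, -t] * (!![1, u; 0, 1] * !![e, 0; 0, e⁻¹]) =
      (!![1, u; 0, 1] * !![e, 0; 0, e⁻¹]) * !![t, 2 * (t * u) * (e⁻¹ * e⁻¹); 0, -t] := by
    ext i j
    fin_cases i <;> fin_cases j <;> simp [Matrix.mul_apply, Fin.sum_univ_two] <;> field_simp <;>
      ring
  rw [Matrix.mul_assoc, key, Matrix.nonsing_inv_mul_cancel_left _ _ hd]

/-- **Computation of the truncated Bruhat cells (proof of Proposition 9.2).**
Assume `char k ≠ 2`, let `t ∈ F` be nonzero, and for `n ∈ ℕ`, `u ∈ F`, set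
`x_u = !![1, u; 0, 1] * !![εⁿ, 0; 0, ε⁻ⁿ]`.  With `γ_t = !![t, 0; 0, -t]`,
all entries of `x_u⁻¹ * γ_t * x_u` lie in `𝔬` iff `v t ≥ 0` and
`v u ≥ 2n - v t` (the latter written additively as `2n ≤ v u + v t`). -/
theorem truncated_cell_membership
    {k : Type} [Field k] (h2 : (2 : k) ≠ 0)
    (t : LaurentSeries k) (ht : t ≠ 0) (n : ℕ) (u : LaurentSeries k) :
    (∀ i j,
      ((!![1, u; 0, 1] * !![(ε k) ^ n, 0; 0, ((ε k) ^ n)⁻¹])⁻¹ *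
        !![t, 0; 0, -t] *
        (!![1, u; 0, 1] * !![(ε k) ^ n, 0; 0, ((ε k) ^ n)⁻¹])) i j ∈ intRing k) ↔
    (0 ≤ v t ∧ ((2 * (n : ℤ) : ℤ) : WithTop ℤ) ≤ v u + v t) := by
  have hs : (ε k) ^ n ≠ 0 := by
    rw [ε_pow_eq]; exact HahnSeries.single_ne_zero one_ne_zero
  have hv : v ((ε k) ^ n) = ((n : ℤ) : WithTop ℤ) := by
    rw [v_eq_orderTop, ε_pow_eq, HahnSeries.orderTop_single one_ne_zero]
  rw [conj_eq t u _ hs]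
  have h12 : 2 * (t * u) * (((ε k) ^ n)⁻¹ * ((ε k) ^ n)⁻¹) ∈ intRing k ↔
      ((2 * (n : ℤ) : ℤ) : WithTop ℤ) ≤ v u + v t := by
    rw [mem_intRing_iff]
    have h := congrArg v (show 2 * (t * u) * (((ε k) ^ n)⁻¹ * ((ε k) ^ n)⁻¹) *
      ((ε k) ^ n * (ε k) ^ n) = 2 * (t * u) by field_simp)
    generalize 2 * (t * u) * (((ε k) ^ n)⁻¹ * ((ε k) ^ n)⁻¹) = y at h ⊢
    simp only [v_mul', v_two h2, hv, zero_add] at h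
    rw [add_comm (v u), ← h, ← WithTop.coe_add]
    generalize v y = a
    induction a with
    | top => simp
    | coe a =>
      rw [← WithTop.coe_add, WithTop.coe_le_coe, ← WithTop.coe_zero, WithTop.coe_le_coe]
      omega
  rw [← h12, ← mem_intRing_iff]
  constructor
  · intro h
    exact ⟨by simpa using h 0 0, by simpa using h 0 1⟩
  · rintro ⟨h1, h3⟩ i j
    fin_cases i <;> fin_cases j
    · simpa using h1
    · exact h3
    · simp
    · simpa using h1
end
end
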